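/- arXiv:2410.13463 — 5 statements merged into one kernel-verified Lean document; each statement's English description precedes it below -/
import Mathlib

section
/- (Lemma A.1, variance function property.) For any t ∈ {0,…,T−2} such that f_t < 0, there exists t̄ with t < t̄ ≤ T−1 such that Σ_{i=t}^{t̄} f_i ≥ 0. -/
/-!
The choice `tbar = T - 1` works for every `t ≤ T - 2`, because the sum of `f i` over
`t ≤ i < T` is the variance of the discounted tail `∑_{t ≤ i < T} γ^i X_i`, hence nonnegative. This identity is
`sum_eq_variance_tail`, proved by removing the first term of the tail: the term `f t` is exactly
the increment `Var(Y + S) - Var(S)` with `Y = γ^t X_t` and `S` the tail from `t + 1` on.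
-/

open MeasureTheory ProbabilityTheory

/-- Covariance of two real random variables: `Cov(f,g) = E[f g] - E[f] E[g]`. -/
noncomputable def cov {Ω : Type*} [MeasurableSpace Ω] (μ : Measure Ω) (f g : Ω → ℝ) : ℝ :=
  (∫ ω, f ω * g ω ∂μ) - (∫ ω, f ω ∂μ) * (∫ ω, g ω ∂μ)

/-- For square-integrable variables, `cov` agrees with Mathlib's centered covariance. -/
lemma cov_eq_covariance {Ω : Type*} [MeasurableSpace Ω] (μ : Measure Ω) [IsProbabilityMeasure μ]
    {Y Z : Ω → ℝ} (hY : MemLp Y 2 μ) (hZ : MemLp Z 2 μ) :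
    cov μ Y Z = covariance Y Z μ := by
  rw [covariance_eq_sub hY hZ]
  rfl

lemma sum_eq_variance_tail
    {Ω : Type*} [MeasurableSpace Ω] (μ : Measure Ω) [IsProbabilityMeasure μ]
    (T : ℕ) (γ : ℝ) (X : Ω → ℕ → ℝ)
    (hX : ∀ t < T, MemLp (fun ω => X ω t) 2 μ)
    (f : ℕ → ℝ)
    (hf : ∀ t, f t = γ ^ (2 * t) * variance (fun ω => X ω t) μ
        + 2 * ∑ t' ∈ Finset.Ico (t + 1) T,
            γ ^ (t + t') * cov μ (fun ω => X ω t) (fun ω => X ω t'))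
    (t : ℕ) (ht : t ≤ T) :
    ∑ i ∈ Finset.Ico t T, f i
      = variance (fun ω => ∑ i ∈ Finset.Ico t T, γ ^ i * X ω i) μ := by
  induction ht using Nat.decreasingInduction with
  | self =>
    simp only [Finset.Ico_self, Finset.sum_empty]
    exact (variance_zero μ).symm
  | of_succ t ht ih =>
    have hterm : ∀ i ∈ Finset.Ico (t + 1) T, MemLp (fun ω => γ ^ i * X ω i) 2 μ :=
      fun i hi => (hX i (Finset.mem_Ico.mp hi).2).const_mul _
    simp_rw [Finset.sum_eq_sum_Ico_succ_bot ht]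
    rw [variance_fun_add ((hX t ht).const_mul _) (memLp_finsetSum _ hterm), ← ih,
      variance_const_mul, covariance_const_mul_left, covariance_fun_sum_right' hterm (hX t ht),
      hf t, Finset.mul_sum (a := γ ^ t), pow_mul']
    congr 3
    refine Finset.sum_congr rfl fun i hi => ?_
    rw [covariance_const_mul_right,
      cov_eq_covariance μ (hX t ht) (hX i (Finset.mem_Ico.mp hi).2)]
    ring

/-- **Lemma A.1 (variance function property).**  With
`f t = γ^{2t} Var(X t) + 2 ∑_{t'=t+1}^{T−1} γ^{t+t'} Cov(X t, X t')`,
for any `t ∈ {0,…,T−2}` such that `f t < 0` there exists `t̄` with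
`t < t̄ ≤ T−1` and `∑_{i=t}^{t̄} f i ≥ 0`. -/
theorem variance_function_property
    {Ω : Type*} [MeasurableSpace Ω] (μ : Measure Ω) [IsProbabilityMeasure μ]
    (T : ℕ) (hT : 1 ≤ T) (γ : ℝ) (hγ : γ ∈ Set.Ioo (0 : ℝ) 1)
    (X : Ω → ℕ → ℝ)
    (hmeas : ∀ t, Measurable (fun ω => X ω t))
    (hrange : ∀ ω, ∀ t < T, X ω t ∈ Set.Icc (0 : ℝ) 1)
    (f : ℕ → ℝ)
    (hf : ∀ t, f t = γ ^ (2 * t) * variance (fun ω => X ω t) μ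
        + 2 * ∑ t' ∈ Finset.Ico (t + 1) T,
            γ ^ (t + t') * cov μ (fun ω => X ω t) (fun ω => X ω t'))
    (t : ℕ) (ht : t + 2 ≤ T) (hft : f t < 0) :
    ∃ tbar : ℕ, t < tbar ∧ tbar ≤ T - 1 ∧ 0 ≤ ∑ i ∈ Finset.Icc t tbar, f i := by
  have hX : ∀ s < T, MemLp (fun ω => X ω s) 2 μ := fun s hs =>
    memLp_of_bounded (ae_of_all _ fun ω => hrange ω s hs) (hmeas s).aestronglyMeasurable 2
  refine ⟨T - 1, by omega, le_rfl, ?_⟩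
  have hIcc : Finset.Icc t (T - 1) = Finset.Ico t T := by
    ext i
    simp only [Finset.mem_Icc, Finset.mem_Ico]
    omega
  rw [hIcc, sum_eq_variance_tail μ T γ X hX f hf t (by omega)]
  exact variance_nonneg _ _
end

section
/- (Lemma A.2, optimization of variance-like functions.) Let k ≥ 1 be an integer and c = (c_1,…,c_k) with c_i ∈ ℝ, c_1 < 0, Σ_{i=1}^{k̄} c_i ≤ 0 for all k̄ < k, and Σ_{i=1}^{k} c_i ≥ 0. Let Λ be a real with Λ ≥ k. Then the uniform vector x̄ = (Λ/k,…,Λ/k) is an optimal solution of minimizing Σ_{i=1}^{k} c_i/x_i over all x = (x_1,…,x_k) with Σ_{i=1}^{k} x_i = Λ, x_i ≥ x_{i+1} for all i ∈ {1,…,k−1}, and x_i ≥ 1 for all i; that is, for every such feasible x, Σ_{i=1}^{k} c_i·(k/Λ) ≤ Σ_{i=1}^{k} c_i/x_i. -/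
/-! Summation by parts. With `S_n = c_1 + ⋯ + c_n`,
`∑ c_i / x_i = S_k / x_k + ∑_{j<k} S_j (1 / x_j - 1 / x_{j+1})`, and each term of the last sum is
a product of two nonpositive factors, so `S_k / x_k ≤ ∑ c_i / x_i`. Since `x` is nonincreasing,
its last entry is at most its average, i.e. `k / Λ ≤ 1 / x_k`, and `S_k ≥ 0` concludes. Both
inequalities are proved by induction on the length of the prefix. -/

/-- **Lemma A.2 (optimization of variance-like functions).**
Let `k ≥ 1`, `c : {1,…,k} → ℝ` with `c 1 < 0`, all proper prefix sums nonpositive and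
the total sum nonnegative, and let `Λ ≥ k`.  Then the uniform vector `(Λ/k,…,Λ/k)` is
optimal: for every feasible `x` (summing to `Λ`, nonincreasing, entrywise at least `1`),
`∑_{i=1}^{k} c_i (k/Λ) ≤ ∑_{i=1}^{k} c_i / x_i`. -/
theorem uniform_optimal_variance_like
    (k : ℕ) (hk : 1 ≤ k) (c : ℕ → ℝ)
    (hc1 : c 1 < 0)
    (hcpre : ∀ k', 1 ≤ k' → k' < k → ∑ i ∈ Finset.Icc 1 k', c i ≤ 0)
    (hcsum : 0 ≤ ∑ i ∈ Finset.Icc 1 k, c i)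
    (Λ : ℝ) (hΛ : (k : ℝ) ≤ Λ)
    (x : ℕ → ℝ)
    (hsum : ∑ i ∈ Finset.Icc 1 k, x i = Λ)
    (hmono : ∀ i, 1 ≤ i → i + 1 ≤ k → x (i + 1) ≤ x i)
    (hx1 : ∀ i, 1 ≤ i → i ≤ k → 1 ≤ x i) :
    ∑ i ∈ Finset.Icc 1 k, c i * ((k : ℝ) / Λ) ≤ ∑ i ∈ Finset.Icc 1 k, c i / x i := by
  have h_abel : ∀ n, 1 ≤ n → n ≤ k →
      (∑ i ∈ Finset.Icc 1 n, c i) / x n ≤ ∑ i ∈ Finset.Icc 1 n, c i / x i := by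
    intro n hn
    induction n, hn using Nat.le_induction with
    | base => intro _; simp
    | succ n hn ih =>
      intro hnk
      have hpos := hx1 (n + 1) (by omega) hnk
      have hinv : (x n)⁻¹ ≤ (x (n + 1))⁻¹ := inv_anti₀ (by linarith) (hmono n hn hnk)
      have hstep := mul_le_mul_of_nonpos_left hinv (hcpre n hn (by omega))
      have hprev := ih (by omega)
      rw [Finset.sum_Icc_succ_top (by omega), Finset.sum_Icc_succ_top (by omega), add_div]
      rw [div_eq_mul_inv] at hprev
      rw [div_eq_mul_inv (∑ i ∈ Finset.Icc 1 n, c i)]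
      linarith
  have h_avg : ∀ n, 1 ≤ n → n ≤ k → (n : ℝ) * x n ≤ ∑ i ∈ Finset.Icc 1 n, x i := by
    intro n hn
    induction n, hn using Nat.le_induction with
    | base => intro _; simp
    | succ n hn ih =>
      intro hnk
      have hprev := ih (by omega)
      have hstep := mul_le_mul_of_nonneg_left (hmono n hn hnk) (Nat.cast_nonneg (α := ℝ) n)
      rw [Finset.sum_Icc_succ_top (by omega)]
      push_cast
      linarith
  have hlast := h_avg k hk le_rfl
  rw [hsum] at hlast
  have hxk : 0 < x k := by linarith [hx1 k hk le_rfl]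
  have hΛpos : 0 < Λ := by
    have : (1 : ℝ) ≤ k := by exact_mod_cast hk
    linarith
  have hratio : (k : ℝ) / Λ ≤ (x k)⁻¹ := by
    rw [← one_div, div_le_div_iff₀ hΛpos hxk]
    linarith
  rw [← Finset.sum_mul]
  calc (∑ i ∈ Finset.Icc 1 k, c i) * ((k : ℝ) / Λ)
      ≤ (∑ i ∈ Finset.Icc 1 k, c i) * (x k)⁻¹ := mul_le_mul_of_nonneg_left hratio hcsum
    _ = (∑ i ∈ Finset.Icc 1 k, c i) / x k := (div_eq_mul_inv _ _).symm
    _ ≤ _ := h_abel k hk le_rfl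
end

section
/- (Lemma A.5, rounding effect error.) Let T ≥ 1 be an integer, n : {0,…,T−1} → ℝ with n_t ≥ 1 for all t, q = Σ_{t=0}^{T−1} n_t, k = q − Σ_{t=0}^{T−1} ⌊n_t⌋, and define n̄_t = ⌊n_t⌋ + 1 if t < k and n̄_t = ⌊n_t⌋ otherwise. Then for any c : {0,…,T−1} → ℝ: (i) Σ_{t : c_t ≥ 0} c_t/n̄_t ≤ 2·Σ_{t : c_t ≥ 0} c_t/n_t, and (ii) Σ_{t : c_t ≤ 0} c_t/n̄_t ≤ (1/2)·Σ_{t : c_t ≤ 0} c_t/n_t. -/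
/-!
Write `f = ⌊n_t⌋`. Since `n_t ≥ 1`, we have `f ≥ 1`, so both `n_t` and `n̄_t` lie in
`[f, f + 1] ⊆ [f, 2 f]`. Hence each is at most twice the other, that is,
`1 / (2 n_t) ≤ 1 / n̄_t ≤ 2 / n_t`. Both inequalities then hold term by term, according to the
sign of `c_t`.
-/

/-- **Lemma A.5 (rounding effect error).**  Let `n : {0,…,T−1} → ℝ` with `n_t ≥ 1`,
`q = ∑_t n_t`, `k = q − ∑_t ⌊n_t⌋`, and `n̄_t = ⌊n_t⌋ + 1` if `t < k`,
`n̄_t = ⌊n_t⌋` otherwise.  Then for any `c : {0,…,T−1} → ℝ`: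
(i) `∑_{t : c_t ≥ 0} c_t/n̄_t ≤ 2 ∑_{t : c_t ≥ 0} c_t/n_t`, and
(ii) `∑_{t : c_t ≤ 0} c_t/n̄_t ≤ (1/2) ∑_{t : c_t ≤ 0} c_t/n_t`. -/
theorem rounding_effect_error
    (T : ℕ) (hT : 1 ≤ T) (n : ℕ → ℝ) (hn : ∀ t < T, 1 ≤ n t)
    (q k : ℝ)
    (hq : q = ∑ t ∈ Finset.range T, n t)
    (hk : k = q - ∑ t ∈ Finset.range T, (⌊n t⌋ : ℝ))
    (nbar : ℕ → ℝ)
    (hnbar : ∀ t, nbar t = (⌊n t⌋ : ℝ) + (if (t : ℝ) < k then 1 else 0))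
    (c : ℕ → ℝ) :
    ((∑ t ∈ (Finset.range T).filter (fun t => 0 ≤ c t), c t / nbar t)
        ≤ 2 * ∑ t ∈ (Finset.range T).filter (fun t => 0 ≤ c t), c t / n t) ∧
    ((∑ t ∈ (Finset.range T).filter (fun t => c t ≤ 0), c t / nbar t)
        ≤ (1 / 2) * ∑ t ∈ (Finset.range T).filter (fun t => c t ≤ 0), c t / n t) := by
  have key : ∀ t < T, 0 < n t ∧ 0 < nbar t ∧ n t ≤ 2 * nbar t ∧ nbar t ≤ 2 * n t := by
    intro t ht
    have h1 := hn t ht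
    have hf : (1 : ℝ) ≤ (⌊n t⌋ : ℝ) := by
      exact_mod_cast Int.le_floor.mpr (by exact_mod_cast h1)
    have h2 := Int.floor_le (n t)
    have h3 := Int.lt_floor_add_one (n t)
    rw [hnbar t]
    split_ifs <;> refine ⟨?_, ?_, ?_, ?_⟩ <;> linarith
  constructor
  · rw [Finset.mul_sum]
    refine Finset.sum_le_sum fun t ht => ?_
    obtain ⟨ht, hc⟩ := Finset.mem_filter.mp ht
    obtain ⟨h1, h2, h3, -⟩ := key t (Finset.mem_range.mp ht)
    rw [← mul_div_assoc, div_le_div_iff₀ h2 h1]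
    linarith [mul_le_mul_of_nonneg_left h3 hc]
  · rw [Finset.mul_sum]
    refine Finset.sum_le_sum fun t ht => ?_
    obtain ⟨ht, hc⟩ := Finset.mem_filter.mp ht
    obtain ⟨h1, h2, -, h4⟩ := key t (Finset.mem_range.mp ht)
    rw [← mul_div_assoc, div_le_div_iff₀ h2 h1]
    linarith [mul_le_mul_of_nonpos_left h4 hc]
end

section
/- (Arithmetic core of the Proposition on the sub-optimality of the robust strategy of Poiani et al.) For every real c > 0 there exist γ ∈ (0,1) and an integer T > 2 such that (1/2)·( Σ_{t=0}^{T−1} √(d_t) ) / √(d_0) > c, where d_t = γ^t·(γ^t + γ^{t+1} − 2γ^T)/(1−γ) for t ∈ {0,…,T−1}. In other words, the quantity (1/2)·(Σ_{t=0}^{T−1} √(d_t))/√(d_0) is unbounded over γ ∈ (0,1) and T ∈ ℕ. -/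
/-!
Fix a number `N > 6c` of terms. Taking `γ = 1 - 1/(2N)`, Bernoulli's inequality keeps `γ^t ≥ 1/2`
for all `t ≤ N`; then `T` is taken so large that `γ^T < 1/4`. For `t < N` this gives
`d_t ≥ (1/4)/(1-γ)`, while `d_0 ≤ 2/(1-γ)`, so `√d_t ≥ √d_0 / 3`. Hence the first `N` terms alone
contribute at least `N/6 > c` to the quantity.
-/

/-- **Arithmetic core of the sub-optimality of the robust strategy of Poiani et al.**
With `d_t = γ^t (γ^t + γ^{t+1} − 2γ^T)/(1−γ)`, the quantity
`(1/2) (∑_{t=0}^{T−1} √(d_t)) / √(d_0)` is unbounded over `γ ∈ (0,1)` and `T > 2`: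
for every `c > 0` there exist `γ ∈ (0,1)` and an integer `T > 2` such that this
quantity exceeds `c`. -/
theorem robust_strategy_suboptimal :
    ∀ c : ℝ, 0 < c → ∃ γ : ℝ, γ ∈ Set.Ioo (0 : ℝ) 1 ∧ ∃ T : ℕ, 2 < T ∧
      c < (1 / 2) *
        (∑ t ∈ Finset.range T,
            Real.sqrt (γ ^ t * (γ ^ t + γ ^ (t + 1) - 2 * γ ^ T) / (1 - γ)))
        / Real.sqrt (γ ^ 0 * (γ ^ 0 + γ ^ 1 - 2 * γ ^ T) / (1 - γ)) := by
  intro c hc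
  obtain ⟨M, hM⟩ := exists_nat_gt (6 * c)
  obtain ⟨N, hN2, hNc⟩ : ∃ N : ℕ, 2 ≤ N ∧ 6 * c < N :=
    ⟨M + 2, by omega, by push_cast; linarith⟩
  have hN2' : (2 : ℝ) ≤ N := by exact_mod_cast hN2
  obtain ⟨γ, hγ⟩ : ∃ γ : ℝ, γ = 1 + -(1 / (2 * N)) := ⟨_, rfl⟩
  have hpos : (0 : ℝ) < 1 / (2 * N) := by positivity
  have hle : (1 : ℝ) / (2 * N) ≤ 1 / 4 :=
    one_div_le_one_div_of_le (by norm_num) (by linarith)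
  have hγ0 : 0 < γ := by linarith
  have hγ1 : γ < 1 := by linarith
  have hγN : 1 / 2 ≤ γ ^ N := by
    have h := one_add_mul_le_pow (a := -(1 / (2 * (N : ℝ)))) (by linarith) N
    rw [← hγ] at h
    have h2 : 1 + (N : ℝ) * -(1 / (2 * N)) = 1 / 2 := by field_simp; norm_num
    linarith
  obtain ⟨T, hT⟩ := exists_pow_lt_of_lt_one (show (0 : ℝ) < 1 / 4 by norm_num) hγ1
  have hNT : N < T := by
    by_contra! h
    have := pow_le_pow_of_le_one hγ0.le hγ1.le h
    linarith
  refine ⟨γ, ⟨hγ0, hγ1⟩, T, by omega, ?_⟩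
  have hT0 : 0 < γ ^ T := pow_pos hγ0 T
  have h1γ : 0 < 1 - γ := by linarith
  have hd0 : 0 < γ ^ 0 * (γ ^ 0 + γ ^ 1 - 2 * γ ^ T) / (1 - γ) := by
    apply div_pos _ h1γ
    simp only [pow_zero, pow_one]
    linarith
  have hterm : ∀ t ∈ Finset.range N,
      Real.sqrt (γ ^ 0 * (γ ^ 0 + γ ^ 1 - 2 * γ ^ T) / (1 - γ)) / 3 ≤
        Real.sqrt (γ ^ t * (γ ^ t + γ ^ (t + 1) - 2 * γ ^ T) / (1 - γ)) := by
    intro t ht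
    have ht' := Finset.mem_range.mp ht
    have h1 : 1 / 2 ≤ γ ^ t := hγN.trans (pow_le_pow_of_le_one hγ0.le hγ1.le ht'.le)
    have h2 : 1 / 2 ≤ γ ^ (t + 1) := hγN.trans (pow_le_pow_of_le_one hγ0.le hγ1.le ht')
    apply Real.le_sqrt_of_sq_le
    rw [div_pow, Real.sq_sqrt hd0.le, div_right_comm]
    apply div_le_div_of_nonneg_right _ h1γ.le
    simp only [pow_zero, pow_one]
    nlinarith
  have hsum := Finset.card_nsmul_le_sum _ _ _ hterm
  have hsub := Finset.sum_le_sum_of_subset_of_nonneg (Finset.range_mono hNT.le)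
    (fun t _ _ => Real.sqrt_nonneg (γ ^ t * (γ ^ t + γ ^ (t + 1) - 2 * γ ^ T) / (1 - γ)))
  rw [Finset.card_range, nsmul_eq_mul] at hsum
  have hs := Real.sqrt_pos.mpr hd0
  rw [lt_div_iff₀ hs]
  nlinarith [mul_lt_mul_of_pos_right hNc hs]
end

section
/- (Lemma on the exploration error.) Let T ≥ 1 be an integer, f = c : {0,…,T−1} → ℝ, and assume q(y) exists for every y ∈ 𝒴. Let c₀ > 1 be real, b = c₀·T, K ≥ 1 an integer, and Λ = K·b. Suppose x̃* ∈ F(b − T) has strictly positive entries and minimizes Σ_{t=0}^{T−1} f_t/x_t over all x ∈ F(b − T) with strictly positive entries; suppose x* ∈ F(Λ) has strictly positive entries and minimizes Σ_{t=0}^{T−1} f_t/x_t over all x ∈ F(Λ) with strictly positive entries; and suppose n* : {0,…,T−1} → ℕ satisfies n*_t ≥ 1 for all t, n*_t ≥ n*_{t+1} for all t ≤ T−2, Σ_{t=0}^{T−1} n*_t ≤ Λ, and minimizes Σ_{t=0}^{T−1} f_t/n_t over all integer vectors n with these constraints. Then (2/K)·Σ_{t=0}^{T−1} f_t/(x̃*_t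 + 1) − Σ_{t=0}^{T−1} f_t/n*_t ≤ ((c₀+1)/(c₀−1))·Σ_{t=0}^{T−1} f_t/x*_t. -/
/-!
Write `V(B)` for the minimum of `∑ f_t / x_t` over the positive vectors of `F(B)`. By homogeneity
`V(B)` is proportional to `1 / B`, so the optimal value for `b - T` is `K c₀ / (c₀ - 1)` times the
optimal value for `Λ`. The claim follows from two inequalities.

* `∑ f_t / (x̃_t + 1) ≤ ∑ f_t / x̃_t`. The difference is `∑ f_t h_t` with `h = 1 / (x̃ (x̃ + 1))`,
  which is nonnegative and nondecreasing, and every such sum is nonnegative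
  (`sum_mul_nonneg_of_mono`).
* `V(Λ) ≤ ∑ f_t / n_t` for every positive nonincreasing `n` of total at most `Λ`. Replacing `1 / n`
  on each maximal block `{y, …, q y}` by its value at `q y` lowers both the objective and the budget
  and makes the vector constant on blocks (`exists_block_constant`); scaling up to the budget `Λ`
  lowers the objective further.

Both rest on `block_sum_le`: on a block the proper partial sums of `f` are negative, so summation by
parts gives `h_q ∑ f_i ≤ ∑ f_i h_i` for nondecreasing `h`. The factor is then
`2 c₀ / (c₀ - 1) - 1 = (c₀ + 1) / (c₀ - 1)`.
-/

/-- The feasible set `F(B)`: vectors `x : {0,…,T−1} → ℝ` summing to `B`, nonincreasing,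
nonnegative, and constant on each block `{y,…,q y}` for every index `y` with `c y < 0`. -/
def Feas (T : ℕ) (c : ℕ → ℝ) (q : ℕ → ℕ) (B : ℝ) (x : ℕ → ℝ) : Prop :=
  (∑ t ∈ Finset.range T, x t = B) ∧
  (∀ t, t + 2 ≤ T → x (t + 1) ≤ x t) ∧
  (∀ t < T, 0 ≤ x t) ∧
  (∀ y, y < T → c y < 0 → ∀ j, y ≤ j → j ≤ q y → x j = x y)

/-- `BlockEnd T f q` says that for each `y < T` with `f y < 0`, `q y` is the first index in
`{y+1, …, T-1}` at which the partial sum of `f` from `y` is nonnegative. -/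
def BlockEnd (T : ℕ) (f : ℕ → ℝ) (q : ℕ → ℕ) : Prop :=
  ∀ y, y < T → f y < 0 →
    y < q y ∧ q y ≤ T - 1 ∧ (0 ≤ ∑ i ∈ Finset.Icc y (q y), f i) ∧
      ∀ j, y < j → j < q y → ∑ i ∈ Finset.Icc y j, f i < 0

lemma le_of_step {T : ℕ} {x : ℕ → ℝ} (h : ∀ t, t + 2 ≤ T → x (t + 1) ≤ x t)
    {i j : ℕ} (hij : i ≤ j) (hj : j < T) : x j ≤ x i := by
  induction j, hij using Nat.le_induction with
  | base => exact le_rfl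
  | succ k hk ih => exact (h k (by omega)).trans (ih (by omega))

/-- Summation by parts: if the proper partial sums of `f` from `s` are nonpositive, a nondecreasing
weight `h` may be replaced by its last value at the cost of lowering the sum. -/
lemma block_sum_le (f h : ℕ → ℝ) (s m : ℕ) (hsm : s ≤ m)
    (hpart : ∀ j, s ≤ j → j < m → ∑ i ∈ Finset.Ico s (j + 1), f i ≤ 0)
    (hmono : ∀ i, s ≤ i → i < m → h i ≤ h (i + 1)) :
    (∑ i ∈ Finset.Ico s (m + 1), f i) * h m ≤ ∑ i ∈ Finset.Ico s (m + 1), f i * h i := by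
  induction m, hsm using Nat.le_induction with
  | base => simp
  | succ k hk ih =>
    have h1 := ih (fun j hj hjk => hpart j hj (by omega)) (fun i hi hik => hmono i hi (by omega))
    have h2 := hpart k hk (by omega)
    have h3 := hmono k hk (by omega)
    rw [Finset.sum_Ico_succ_top (by omega : s ≤ k + 1),
      Finset.sum_Ico_succ_top (by omega : s ≤ k + 1) (fun i => f i * h i)]
    nlinarith [mul_le_mul_of_nonpos_left h3 h2]

lemma BlockEnd.partial_neg {T : ℕ} {f : ℕ → ℝ} {q : ℕ → ℕ} (hq : BlockEnd T f q) {y : ℕ}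
    (hy : y < T) (hf : f y < 0) {j : ℕ} (hyj : y ≤ j) (hj : j < q y) :
    ∑ i ∈ Finset.Ico y (j + 1), f i < 0 := by
  rcases hyj.eq_or_lt with rfl | h
  · simpa using hf
  · have := (hq y hy hf).2.2.2 j h hj
    rwa [← Finset.Ico_add_one_right_eq_Icc] at this

lemma BlockEnd.total_nonneg {T : ℕ} {f : ℕ → ℝ} {q : ℕ → ℕ} (hq : BlockEnd T f q) {y : ℕ}
    (hy : y < T) (hf : f y < 0) : 0 ≤ ∑ i ∈ Finset.Ico y (q y + 1), f i := by
  have := (hq y hy hf).2.2.1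
  rwa [← Finset.Ico_add_one_right_eq_Icc] at this

/-- Blocks are nested: a block starting inside another one ends no later. -/
lemma BlockEnd.nested {T : ℕ} {f : ℕ → ℝ} {q : ℕ → ℕ} (hq : BlockEnd T f q) {s y : ℕ}
    (hs : s < T) (hfs : f s < 0) (hsy : s < y) (hyq : y ≤ q s) (hfy : f y < 0) :
    q y ≤ q s := by
  have hqs := (hq s hs hfs).2.1
  by_contra! hlt
  have h1 := hq.partial_neg (by omega) hfy hyq hlt
  have h2 := hq.partial_neg hs hfs (j := y - 1) (by omega) (by omega)
  rw [Nat.sub_add_cancel (by omega)] at h2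
  have h3 := hq.total_nonneg hs hfs
  rw [← Finset.sum_Ico_consecutive f hsy.le (by omega : y ≤ q s + 1)] at h3
  linarith

lemma BlockEnd.block_sum_le {T : ℕ} {f : ℕ → ℝ} {q : ℕ → ℕ} (hq : BlockEnd T f q) {h : ℕ → ℝ}
    (hmono : ∀ t, t + 2 ≤ T → h t ≤ h (t + 1)) {s : ℕ} (hs : s < T) (hf : f s < 0) :
    (∑ i ∈ Finset.Ico s (q s + 1), f i) * h (q s) ≤ ∑ i ∈ Finset.Ico s (q s + 1), f i * h i := by
  obtain ⟨h1, h2, -, -⟩ := hq s hs hf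
  exact _root_.block_sum_le f h s (q s) h1.le (fun j hj hjq => (hq.partial_neg hs hf hj hjq).le)
    (fun i _ hi => hmono i (by omega))

lemma sum_mul_nonneg_of_mono {T : ℕ} {f : ℕ → ℝ} {q : ℕ → ℕ} (hq : BlockEnd T f q) {h : ℕ → ℝ}
    (hmono : ∀ t, t + 2 ≤ T → h t ≤ h (t + 1)) (hpos : ∀ t < T, 0 ≤ h t) (s : ℕ) (hs : s ≤ T) :
    0 ≤ ∑ i ∈ Finset.Ico s T, f i * h i := by
  -- Each step moves `s` past a single index or past the whole block starting at `s`.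
  induction hd : T - s using Nat.strong_induction_on generalizing s with
  | _ d ih =>
    rcases hs.eq_or_lt with rfl | hs'
    · simp
    rcases le_or_gt 0 (f s) with hf | hf
    · rw [Finset.sum_eq_sum_Ico_succ_bot hs']
      exact add_nonneg (mul_nonneg hf (hpos s hs')) (ih _ (by omega) (s + 1) hs' rfl)
    · obtain ⟨h1, h2, -, -⟩ := hq s hs' hf
      rw [← Finset.sum_Ico_consecutive _ (by omega : s ≤ q s + 1) (by omega : q s + 1 ≤ T)]
      have := hq.block_sum_le hmono hs' hf
      have := mul_nonneg (hq.total_nonneg hs' hf) (hpos (q s) (by omega))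
      have := ih _ (by omega) (q s + 1) (by omega) rfl
      linarith

/-- A nondecreasing weight `h` on `{s, …, T-1}` is dominated by a nondecreasing weight `g` that is
constant on blocks and does not increase the weighted sum of `f`; on a maximal block, `g` is the
value of `h` at the right end. -/
lemma exists_block_constant {T : ℕ} {f : ℕ → ℝ} {q : ℕ → ℕ} (hq : BlockEnd T f q) {h : ℕ → ℝ}
    (hmono : ∀ t, t + 2 ≤ T → h t ≤ h (t + 1)) (s : ℕ) (hs : s ≤ T) :
    ∃ g : ℕ → ℝ, (∀ t, s ≤ t → t + 2 ≤ T → g t ≤ g (t + 1)) ∧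
      (∀ t, s ≤ t → t < T → h t ≤ g t) ∧
      (∀ y, s ≤ y → y < T → f y < 0 → ∀ j, y ≤ j → j ≤ q y → g j = g y) ∧
      ∑ i ∈ Finset.Ico s T, f i * g i ≤ ∑ i ∈ Finset.Ico s T, f i * h i := by
  induction hd : T - s using Nat.strong_induction_on generalizing s with
  | _ d ih =>
    rcases hs.eq_or_lt with rfl | hs'
    · exact ⟨h, fun t _ _ => by omega, fun t _ _ => by omega, fun y _ _ => by omega, le_rfl⟩
    rcases le_or_gt 0 (f s) with hf | hf
    · obtain ⟨g, g1, g2, g3, g4⟩ := ih _ (by omega) (s + 1) hs' rfl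
      refine ⟨fun t => if t ≤ s then h t else g t, ?_, ?_, ?_, ?_⟩
      · intro t ht htT
        rcases ht.eq_or_lt with rfl | ht'
        · simpa using (hmono _ htT).trans (g2 (s + 1) le_rfl (by omega))
        · simpa [show ¬ t ≤ s by omega, show ¬ t + 1 ≤ s by omega] using g1 t ht' htT
      · intro t ht htT
        dsimp only
        split_ifs with hts
        · exact le_rfl
        · exact g2 t (by omega) htT
      · intro y hy hyT hfy j hyj hj
        have hne : y ≠ s := by rintro rfl; linarith
        simpa [show ¬ j ≤ s by omega, show ¬ y ≤ s by omega] using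
          g3 y (by omega) hyT hfy j hyj hj
      · rw [Finset.sum_eq_sum_Ico_succ_bot hs', Finset.sum_eq_sum_Ico_succ_bot hs']
        have : ∑ i ∈ Finset.Ico (s + 1) T, f i * (if i ≤ s then h i else g i)
            = ∑ i ∈ Finset.Ico (s + 1) T, f i * g i := by
          refine Finset.sum_congr rfl fun i hi => ?_
          rw [Finset.mem_Ico] at hi
          rw [if_neg (by omega)]
        rw [this]
        simpa using g4
    · obtain ⟨h1, h2, -, -⟩ := hq s hs' hf
      obtain ⟨g, g1, g2, g3, g4⟩ := ih _ (by omega) (q s + 1) (by omega) rfl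
      have hle : ∀ i j, i ≤ j → j < T → h i ≤ h j := fun i j hij hj =>
        neg_le_neg_iff.1 (le_of_step (x := fun t => -h t)
          (fun t ht => neg_le_neg (hmono t ht)) hij hj)
      refine ⟨fun t => if t ≤ q s then h (q s) else g t, ?_, ?_, ?_, ?_⟩
      · intro t ht htT
        rcases lt_trichotomy t (q s) with h' | rfl | h'
        · simp [h'.le, show t + 1 ≤ q s by omega]
        · simpa using (hmono _ htT).trans (g2 (q s + 1) le_rfl (by omega))
        · simpa [show ¬ t ≤ q s by omega, show ¬ t + 1 ≤ q s by omega] using g1 t h' htT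
      · intro t ht htT
        dsimp only
        split_ifs with hts
        · exact hle t (q s) hts (by omega)
        · exact g2 t (by omega) htT
      · intro y hy hyT hfy j hyj hj
        by_cases hyq : y ≤ q s
        · have hqq : q y ≤ q s := by
            rcases hy.eq_or_lt with rfl | hy'
            · exact le_rfl
            · exact hq.nested hs' hf hy' hyq hfy
          simp [hyq, hj.trans hqq]
        · simpa [show ¬ j ≤ q s by omega, hyq] using g3 y (by omega) hyT hfy j hyj hj
      · rw [← Finset.sum_Ico_consecutive _ (by omega : s ≤ q s + 1) (by omega : q s + 1 ≤ T),
          ← Finset.sum_Ico_consecutive (fun i => f i * h i)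
            (by omega : s ≤ q s + 1) (by omega : q s + 1 ≤ T)]
        have e1 : ∑ i ∈ Finset.Ico s (q s + 1), f i * (if i ≤ q s then h (q s) else g i)
            = (∑ i ∈ Finset.Ico s (q s + 1), f i) * h (q s) := by
          rw [Finset.sum_mul]
          refine Finset.sum_congr rfl fun i hi => ?_
          rw [Finset.mem_Ico] at hi
          rw [if_pos (by omega)]
        have e2 : ∑ i ∈ Finset.Ico (q s + 1) T, f i * (if i ≤ q s then h (q s) else g i)
            = ∑ i ∈ Finset.Ico (q s + 1) T, f i * g i := by
          refine Finset.sum_congr rfl fun i hi => ?_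
          rw [Finset.mem_Ico] at hi
          rw [if_neg (by omega)]
        rw [e1, e2]
        exact add_le_add (hq.block_sum_le hmono hs' hf) g4

lemma Feas.smul {T : ℕ} {c : ℕ → ℝ} {q : ℕ → ℕ} {B : ℝ} {x : ℕ → ℝ} (hx : Feas T c q B x)
    {a : ℝ} (ha : 0 ≤ a) : Feas T c q (a * B) (fun t => a * x t) := by
  obtain ⟨h1, h2, h3, h4⟩ := hx
  refine ⟨by rw [← Finset.mul_sum, h1], fun t ht => mul_le_mul_of_nonneg_left (h2 t ht) ha,
    fun t ht => mul_nonneg ha (h3 t ht), fun y hy hc j hj hjq => ?_⟩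
  simp only [h4 y hy hc j hj hjq]

lemma sum_div_smul (T : ℕ) (f x : ℕ → ℝ) (a : ℝ) :
    ∑ t ∈ Finset.range T, f t / (a * x t) = a⁻¹ * ∑ t ∈ Finset.range T, f t / x t := by
  rw [Finset.mul_sum]
  refine Finset.sum_congr rfl fun t _ => ?_
  rw [div_mul_eq_div_div_swap, div_eq_inv_mul (f t / x t)]

/-- The block constraints cost nothing: every positive nonincreasing vector of total at most `B` is
matched by a positive vector of `F(B)` with no larger objective. -/
lemma exists_feas_le {T : ℕ} (hT : 1 ≤ T) {f : ℕ → ℝ} {q : ℕ → ℕ} (hq : BlockEnd T f q) {B : ℝ}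
    {n : ℕ → ℝ} (hpos : ∀ t < T, 0 < n t) (hmono : ∀ t, t + 2 ≤ T → n (t + 1) ≤ n t)
    (hbud : ∑ t ∈ Finset.range T, n t ≤ B) :
    ∃ x : ℕ → ℝ, Feas T f q B x ∧ (∀ t < T, 0 < x t) ∧
      ∑ t ∈ Finset.range T, f t / x t ≤ ∑ t ∈ Finset.range T, f t / n t := by
  obtain ⟨g, g1, g2, g3, g4⟩ := exists_block_constant hq (h := fun t => (n t)⁻¹)
    (fun t ht => inv_anti₀ (hpos (t + 1) (by omega)) (hmono t ht)) 0 (Nat.zero_le T)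
  have gpos : ∀ t < T, 0 < g t := fun t ht =>
    (inv_pos.2 (hpos t ht)).trans_le (g2 t (Nat.zero_le t) ht)
  have gnonneg := sum_mul_nonneg_of_mono hq (fun t ht => g1 t (Nat.zero_le t) ht)
    (fun t ht => (gpos t ht).le) 0 (Nat.zero_le T)
  rw [Nat.Ico_zero_eq_range] at g4 gnonneg
  set S := ∑ t ∈ Finset.range T, (g t)⁻¹ with hS
  have hSpos : 0 < S := Finset.sum_pos (fun t ht => inv_pos.2 (gpos t (Finset.mem_range.1 ht)))
    (Finset.nonempty_range_iff.2 (by omega))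
  have hSB : S ≤ B := le_trans (Finset.sum_le_sum fun t ht => by
    have ht' := Finset.mem_range.1 ht
    exact inv_le_of_inv_le₀ (hpos t ht') (g2 t (Nat.zero_le t) ht')) hbud
  have hfeas : Feas T f q S (fun t => (g t)⁻¹) :=
    ⟨rfl, fun t ht => inv_anti₀ (gpos t (by omega)) (g1 t (Nat.zero_le t) ht),
      fun t ht => (inv_pos.2 (gpos t ht)).le,
      fun y hy hf j hj hjq => by simp only [g3 y (Nat.zero_le y) hy hf j hj hjq]⟩
  have ha : 1 ≤ B / S := (one_le_div hSpos).2 hSB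
  refine ⟨fun t => B / S * (g t)⁻¹, ?_, fun t ht =>
    mul_pos (by linarith) (inv_pos.2 (gpos t ht)), ?_⟩
  · have := hfeas.smul (a := B / S) (by linarith)
    rwa [div_mul_cancel₀ B hSpos.ne'] at this
  · rw [sum_div_smul]
    simp only [div_inv_eq_mul]
    calc (B / S)⁻¹ * ∑ t ∈ Finset.range T, f t * g t
        ≤ 1 * ∑ t ∈ Finset.range T, f t * g t :=
          mul_le_mul_of_nonneg_right (inv_le_one_of_one_le₀ ha) gnonneg
      _ ≤ ∑ t ∈ Finset.range T, f t / n t := by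
          simpa only [one_mul, div_eq_mul_inv] using g4

/-- **Lemma on the exploration error.**  Here `q y` is the smallest index in
`{y+1,…,T−1}` with `∑_{i=y}^{q y} f_i ≥ 0` (assumed to exist whenever `f y < 0`),
`b = c₀ T` with `c₀ > 1`, and `Λ = K b`.  If `x̃*` minimizes `∑_t f_t/x_t` over the
strictly positive vectors of `F(b−T)`, `x*` minimizes it over the strictly positive
vectors of `F(Λ)`, and `n*` minimizes it over integer vectors that are entrywise at
least `1`, nonincreasing, and of total budget at most `Λ`, then
`(2/K) ∑_t f_t/(x̃*_t + 1) − ∑_t f_t/n*_t ≤ ((c₀+1)/(c₀−1)) ∑_t f_t/x*_t`. -/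
theorem exploration_error
    (T : ℕ) (hT : 1 ≤ T) (f : ℕ → ℝ) (q : ℕ → ℕ)
    (hq : ∀ y, y < T → f y < 0 →
      y < q y ∧ q y ≤ T - 1 ∧ (0 ≤ ∑ i ∈ Finset.Icc y (q y), f i) ∧
        ∀ j, y < j → j < q y → ∑ i ∈ Finset.Icc y j, f i < 0)
    (c₀ : ℝ) (hc₀ : 1 < c₀) (b : ℝ) (hb : b = c₀ * T)
    (K : ℕ) (hK : 1 ≤ K) (Λ : ℝ) (hΛ : Λ = (K : ℝ) * b)
    (xtil : ℕ → ℝ)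
    (hxtilfeas : Feas T f q (b - T) xtil)
    (hxtilpos : ∀ t < T, 0 < xtil t)
    (hxtilmin : ∀ x : ℕ → ℝ, Feas T f q (b - T) x → (∀ t < T, 0 < x t) →
      ∑ t ∈ Finset.range T, f t / xtil t ≤ ∑ t ∈ Finset.range T, f t / x t)
    (xstar : ℕ → ℝ)
    (hxstarfeas : Feas T f q Λ xstar)
    (hxstarpos : ∀ t < T, 0 < xstar t)
    (hxstarmin : ∀ x : ℕ → ℝ, Feas T f q Λ x → (∀ t < T, 0 < x t) →
      ∑ t ∈ Finset.range T, f t / xstar t ≤ ∑ t ∈ Finset.range T, f t / x t)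
    (nstar : ℕ → ℕ)
    (hnstar1 : ∀ t < T, 1 ≤ nstar t)
    (hnstarmono : ∀ t, t + 2 ≤ T → nstar (t + 1) ≤ nstar t)
    (hnstarbud : (∑ t ∈ Finset.range T, (nstar t : ℝ)) ≤ Λ)
    (hnstarmin : ∀ m : ℕ → ℕ, (∀ t < T, 1 ≤ m t) → (∀ t, t + 2 ≤ T → m (t + 1) ≤ m t) →
      (∑ t ∈ Finset.range T, (m t : ℝ)) ≤ Λ →
      ∑ t ∈ Finset.range T, f t / (nstar t : ℝ) ≤ ∑ t ∈ Finset.range T, f t / (m t : ℝ)) :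
    (2 / (K : ℝ)) * (∑ t ∈ Finset.range T, f t / (xtil t + 1))
        - ∑ t ∈ Finset.range T, f t / (nstar t : ℝ)
      ≤ ((c₀ + 1) / (c₀ - 1)) * ∑ t ∈ Finset.range T, f t / xstar t := by
  have hq' : BlockEnd T f q := hq
  have hTpos : (0 : ℝ) < T := by exact_mod_cast hT
  have hKpos : (0 : ℝ) < K := by exact_mod_cast hK
  have hc : 0 < c₀ - 1 := by linarith
  have hc0 : 0 < c₀ := by linarith
  have hn : ∑ t ∈ Finset.range T, f t / xstar t ≤ ∑ t ∈ Finset.range T, f t / (nstar t : ℝ) := by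
    obtain ⟨x, hx, hxpos, hle⟩ := exists_feas_le hT hq' (n := fun t => (nstar t : ℝ))
      (fun t ht => by exact_mod_cast hnstar1 t ht)
      (fun t ht => by exact_mod_cast hnstarmono t ht) hnstarbud
    exact (hxstarmin x hx hxpos).trans hle
  have hshift : ∑ t ∈ Finset.range T, f t / (xtil t + 1) ≤ ∑ t ∈ Finset.range T, f t / xtil t := by
    have h0 := sum_mul_nonneg_of_mono hq' (h := fun t => (xtil t * (xtil t + 1))⁻¹)
      (fun t ht => by
        have h1 := hxtilpos (t + 1) (by omega)
        have h2 := hxtilfeas.2.1 t ht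
        have h3 := hxtilpos t (by omega)
        exact inv_anti₀ (by positivity) (by gcongr))
      (fun t ht => by
        have h1 := hxtilpos t ht
        positivity) 0 (Nat.zero_le T)
    rw [Nat.Ico_zero_eq_range] at h0
    rw [← sub_nonneg, ← Finset.sum_sub_distrib]
    refine h0.trans_eq (Finset.sum_congr rfl fun t ht => ?_)
    have h1 := hxtilpos t (Finset.mem_range.1 ht)
    field_simp
    ring
  -- The rescaled `xstar` is a competitor for `xtil`.
  have hscale : ∑ t ∈ Finset.range T, f t / xtil t
      ≤ (K * c₀ / (c₀ - 1)) * ∑ t ∈ Finset.range T, f t / xstar t := by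
    have ha : 0 < (c₀ - 1) / (K * c₀) := by positivity
    have hfe := hxstarfeas.smul ha.le
    have hbudget : (c₀ - 1) / (K * c₀) * Λ = b - T := by
      rw [hΛ, hb]
      field_simp
    rw [hbudget] at hfe
    have := hxtilmin _ hfe fun t ht => mul_pos ha (hxstarpos t ht)
    rwa [sum_div_smul, inv_div] at this
  have hfirst : (2 / (K : ℝ)) * (∑ t ∈ Finset.range T, f t / (xtil t + 1))
      ≤ (2 * c₀ / (c₀ - 1)) * ∑ t ∈ Finset.range T, f t / xstar t := by
    refine (mul_le_mul_of_nonneg_left (hshift.trans hscale) (by positivity)).trans_eq ?_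
    field_simp
  have hcoef : (c₀ + 1) / (c₀ - 1) = 2 * c₀ / (c₀ - 1) - 1 := by
    field_simp
    ring
  rw [hcoef, sub_mul, one_mul]
  linarith
end
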